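/- Let Γ be a Jordan curve in ℝ² and let T and T' be locally finite tilings of ℝ² such that R_{T'} > R_T and K_{T'} < L(Γ,T') ≤ L(Γ,T). Then L(Γ,T') ≤ (2 K_{T'} + 1) · (R_T / R_{T'}) · L(Γ,T). -/

import Mathlib

/-!
Write `R`, `L` for `R_T`, `L(Γ,T)`, and `R'`, `L'`, `K'` for the corresponding numbers of `T'`. At
most `K'` tiles of `T'` meet a given ball of radius `2R'`: they contain disjoint discs of any radius
below `r_{T'}` and lie in the concentric ball of radius `4R'`, so areas can be compared.

Let `Q` be a maximal subset of `Γ` with mutual distances greater than `2R'`. The balls of radius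
`2R'` around `Q` cover `Γ`, so `L' ≤ |Q| K'`. As `L' > K'`, no such ball contains `Γ`; hence, by
connectedness, the distance to a point `q ∈ Q` takes on `Γ` all values in `[0, R' - R]`. One tile of
`T` accounts for values in a set of length at most `2R`, and no tile of `T` comes within `R' - R` of
two points of `Q`, since `2(R' - R) + 2R = 2R'`. Therefore `|Q| (R' - R) ≤ 2R L`, so that
`L' (R' - R) ≤ 2 K' R L`, and adding `L' R ≤ L R` gives the bound.
-/

noncomputable section

/-- The Euclidean plane. -/
abbrev Plane : Type := EuclideanSpace ℝ (Fin 2)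

/-- The closed unit ball of the plane. -/
def unitDisk : Set Plane := Metric.closedBall 0 1

/-- A tile is a closed subset of the plane homeomorphic to the closed unit ball. -/
def IsTile (t : Set Plane) : Prop := IsClosed t ∧ Nonempty (t ≃ₜ unitDisk)

/-- A tiling of the plane: a countable collection of tiles covering the plane,
with pairwise disjoint interiors. -/
structure Tiling where
  tiles : Set (Set Plane)
  countable : tiles.Countable
  isTile : ∀ t ∈ tiles, IsTile t
  covers : ⋃₀ tiles = Set.univ
  disjInt : tiles.Pairwise fun t s => interior t ∩ interior s = ∅

/-- `rmin U` = sup of radii of closed balls contained in `U`. -/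
def rmin (U : Set Plane) : ℝ :=
  sSup {r : ℝ | 0 < r ∧ ∃ x : Plane, Metric.closedBall x r ⊆ U}

/-- `r_T` : the infimum of `rmin` over the tiles. -/
def tilesr (C : Set (Set Plane)) : ℝ := sInf (rmin '' C)

/-- `R_T` : the supremum of the diameters of tiles, divided by 2. -/
def tilesR (C : Set (Set Plane)) : ℝ := sSup (Metric.diam '' C) / 2

/-- A tiling is locally finite if `R_T < ∞` (i.e. diameters are bounded above)
and `r_T > 0`. -/
def LocFinite (C : Set (Set Plane)) : Prop := BddAbove (Metric.diam '' C) ∧ 0 < tilesr C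

/-- `K_T = ⌊16 R_T² r_T⁻²⌋`. -/
def tK (C : Set (Set Plane)) : ℕ := ⌊16 * tilesR C ^ 2 / tilesr C ^ 2⌋₊

/-- `L(A, T)` : the number of tiles of `T` that intersect `A`. -/
def tL (A : Set Plane) (C : Set (Set Plane)) : ℕ := {t ∈ C | (t ∩ A).Nonempty}.ncard

/-- A simple curve: the image of a continuous injective map from `[0,1]`. -/
def IsSimpleCurve (γ : Set Plane) : Prop :=
  ∃ f : Set.Icc (0:ℝ) 1 → Plane, Continuous f ∧ Function.Injective f ∧ γ = Set.range f

/-- A Jordan curve: the image of a continuous injective map from the circle `S¹`. -/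
def IsJordanCurve (Γ : Set Plane) : Prop :=
  ∃ f : Metric.sphere (0 : Plane) 1 → Plane,
    Continuous f ∧ Function.Injective f ∧ Γ = Set.range f

open MeasureTheory Metric Module
open scoped ENNReal NNReal Function Topology

section Family

variable {X : Type*} {C : Set (Set X)} {A B : Set X} {t : Set X}

/-- The members of the family `C` that meet `A`: the set that `L(A, T)` counts, kept as a set so
that it can be covered and split according to `A`. -/
def tilesMeeting (C : Set (Set X)) (A : Set X) : Set (Set X) :=
  {t ∈ C | (t ∩ A).Nonempty}

lemma tilesMeeting_subset : tilesMeeting C A ⊆ C := fun _ ht => ht.1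

lemma tilesMeeting_mono (hAB : A ⊆ B) : tilesMeeting C A ⊆ tilesMeeting C B :=
  fun _ ht => ⟨ht.1, ht.2.mono (Set.inter_subset_inter_right _ hAB)⟩

lemma tilesMeeting_iUnion {ι : Sort*} (A : ι → Set X) :
    tilesMeeting C (⋃ i, A i) = ⋃ i, tilesMeeting C (A i) := by
  ext t
  simp [tilesMeeting, Set.inter_iUnion]

lemma subset_sUnion_tilesMeeting (hA : A ⊆ ⋃₀ C) : A ⊆ ⋃₀ tilesMeeting C A := fun x hx =>
  let ⟨t, ht, hxt⟩ := hA hx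
  ⟨t, ⟨ht, x, hxt, hx⟩, hxt⟩

end Family

section Counting

variable {X : Type*} [PseudoMetricSpace X] {A : Set X} {C : Set (Set X)} {d s D : ℝ≥0}

lemma encard_tilesMeeting_le_card_mul_of_isCover {Q : Finset X} (hQ : IsCover D A Q) {K : ℕ}
    (hK : ∀ x, (tilesMeeting C (closedBall x D)).encard ≤ K) :
    (tilesMeeting C A).encard ≤ (Q.card * K : ℕ) :=
  calc
    (tilesMeeting C A).encard ≤ (⋃ q ∈ Q, tilesMeeting C (closedBall q D)).encard := by
      simp only [← tilesMeeting_iUnion]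
      exact Set.encard_le_encard (tilesMeeting_mono hQ.subset_iUnion_closedBall)
    _ ≤ ∑ q ∈ Q, (tilesMeeting C (closedBall q D)).encard := Q.set_encard_biUnion_le _
    _ ≤ (Q.card * K : ℕ) := by
      simpa using Finset.sum_le_card_nsmul Q _ _ fun q _ => hK q

lemma packingNumber_le_encard_tilesMeeting (hd : ∀ t ∈ C, ediam t ≤ d) (hA : A ⊆ ⋃₀ C)
    (hdD : d ≤ D) : packingNumber D A ≤ (tilesMeeting C A).encard := by
  refine iSup₂_le fun Q hQA => iSup_le fun hQ => ?_
  choose! tile htile hmem using fun q (hq : q ∈ A) => subset_sUnion_tilesMeeting hA hq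
  refine Set.encard_le_encard_of_injOn (f := tile) (fun q hq => htile q (hQA hq)) ?_
  intro p hp q hq hpq
  by_contra hne
  have hclose : edist p q ≤ ediam (tile q) :=
    edist_le_ediam_of_mem (hpq ▸ hmem p (hQA hp)) (hmem q (hQA hq))
  have hdiam : ediam (tile q) ≤ D :=
    (hd _ (tilesMeeting_subset (htile q (hQA hq)))).trans (by exact_mod_cast hdD)
  exact (hQ hp hq hne).not_ge (hclose.trans hdiam)

lemma pairwiseDisjoint_tilesMeeting_closedBall (hd : ∀ t ∈ C, ediam t ≤ d) {Q : Set X}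
    (hQ : IsSeparated D Q) (hD : 2 * s + d ≤ D) :
    Q.PairwiseDisjoint fun q => tilesMeeting C (A ∩ closedBall q s) := by
  intro p hp q hq hpq
  rw [Function.onFun, Set.disjoint_left]
  rintro t ⟨ht, x, hxt, -, hxp⟩ ⟨-, y, hyt, -, hyq⟩
  refine (hQ hp hq hpq).not_ge ?_
  have hpx : edist p x ≤ s := edist_le_coe.mpr (mem_closedBall'.mp hxp)
  have hyq : edist y q ≤ s := edist_le_coe.mpr (mem_closedBall.mp hyq)
  have hxy : edist x y ≤ d := (edist_le_ediam_of_mem hxt hyt).trans (hd t ht)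
  calc
    edist p q ≤ edist p x + edist x y + edist y q := edist_triangle4 _ _ _ _
    _ ≤ s + d + s := by gcongr
    _ = (2 * s + d : ℝ≥0) := by push_cast; ring
    _ ≤ D := by exact_mod_cast hD

lemma measure_le_ncard_mul {α ι : Type*} [MeasurableSpace α] (μ : Measure α) {I : Set ι}
    (hI : I.Finite) {u : ι → Set α} {v : Set α} {c : ℝ≥0∞} (hv : v ⊆ ⋃ i ∈ I, u i)
    (hu : ∀ i ∈ I, μ (u i) ≤ c) : μ v ≤ I.ncard * c := by
  lift I to Finset ι using hI
  calc
    μ v ≤ μ (⋃ i ∈ I, u i) := measure_mono hv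
    _ ≤ ∑ i ∈ I, μ (u i) := measure_biUnion_finset_le _ _
    _ ≤ (I : Set ι).ncard * c := by simpa using Finset.sum_le_card_nsmul I _ _ hu

lemma le_ncard_mul_of_isPreconnected (hA : IsPreconnected A) (hd : ∀ t ∈ C, ediam t ≤ d)
    {q z : X} (hq : q ∈ A) (hz : z ∈ A) (hs : s ≤ dist z q)
    (hC : A ∩ closedBall q s ⊆ ⋃₀ C) (hfin : C.Finite) : s ≤ C.ncard * d := by
  -- The distance to `q` maps the sets in `C` to sets of length at most `d` that cover `[0, s]`.
  have hcover : Set.Icc 0 (s : ℝ) ⊆ ⋃ t ∈ C, (dist · q) '' t := by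
    intro ρ hρ
    obtain ⟨y, hyA, rfl⟩ : ρ ∈ (dist · q) '' A :=
      hA.intermediate_value hq hz (by fun_prop) ⟨by simpa using hρ.1, hρ.2.trans hs⟩
    obtain ⟨t, ht, hyt⟩ := hC ⟨hyA, hρ.2⟩
    exact Set.mem_biUnion ht ⟨y, hyt, rfl⟩
  have hlength : ∀ t ∈ C, volume ((dist · q) '' t) ≤ d := fun t ht =>
    calc
      volume ((dist · q) '' t) ≤ ediam ((dist · q) '' t) := Real.volume_le_diam _
      _ ≤ ediam t := by simpa using (LipschitzWith.dist_left q).ediam_image_le t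
      _ ≤ d := hd t ht
  have hvol := measure_le_ncard_mul volume hfin hcover hlength
  rw [Real.volume_Icc, sub_zero, ENNReal.ofReal_coe_nnreal] at hvol
  exact_mod_cast hvol

lemma card_mul_le_ncard_tilesMeeting_mul (hA : IsPreconnected A) (hAC : A ⊆ ⋃₀ C)
    (hfin : (tilesMeeting C A).Finite) (hd : ∀ t ∈ C, ediam t ≤ d) {Q : Finset X}
    (hQA : (Q : Set X) ⊆ A) (hQ : IsSeparated D (Q : Set X)) (hD : 2 * s + d ≤ D)
    (hfar : ∀ q ∈ Q, ∃ z ∈ A, s ≤ dist z q) :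
    Q.card * s ≤ (tilesMeeting C A).ncard * d := by
  set N : X → Set (Set X) := fun q => tilesMeeting C (A ∩ closedBall q s)
  have hNA : ∀ q, N q ⊆ tilesMeeting C A := fun q => tilesMeeting_mono Set.inter_subset_left
  have hN : ∀ q ∈ Q, s ≤ (N q).ncard * d := by
    intro q hq
    obtain ⟨z, hz, hzq⟩ := hfar q hq
    exact le_ncard_mul_of_isPreconnected hA (fun t ht => hd t (tilesMeeting_subset ht))
      (hQA hq) hz hzq (subset_sUnion_tilesMeeting (Set.inter_subset_left.trans hAC))
      (hfin.subset (hNA q))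
  have hsum : ∑ q ∈ Q, (N q).ncard ≤ (tilesMeeting C A).ncard := by
    rw [← finsum_mem_coe_finset, ← Q.finite_toSet.ncard_biUnion
      (fun q _ => hfin.subset (hNA q)) (pairwiseDisjoint_tilesMeeting_closedBall hd hQ hD)]
    exact Set.ncard_le_ncard (Set.iUnion₂_subset fun q _ => hNA q) hfin
  calc
    Q.card * s ≤ ∑ q ∈ Q, (N q).ncard * d := by
      simpa using Finset.card_nsmul_le_sum Q _ _ hN
    _ = (∑ q ∈ Q, (N q).ncard : ℕ) * d := by push_cast; rw [Finset.sum_mul]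
    _ ≤ (tilesMeeting C A).ncard * d := by gcongr

theorem ncard_tilesMeeting_mul_le {C' : Set (Set X)} {K : ℕ} (hA : IsPreconnected A)
    (hAC : A ⊆ ⋃₀ C) (hfin : (tilesMeeting C A).Finite) (hd : ∀ t ∈ C, ediam t ≤ d)
    (hK : ∀ x, (tilesMeeting C' (closedBall x D)).encard ≤ K)
    (hKA : K < (tilesMeeting C' A).ncard) (hD : 2 * s + d ≤ D) :
    (tilesMeeting C' A).ncard * s ≤ K * d * (tilesMeeting C A).ncard := by
  have hpacking : packingNumber D A ≠ ⊤ := ne_top_of_le_ne_top hfin.encard_lt_top.ne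
    (packingNumber_le_encard_tilesMeeting hd hAC (le_add_self.trans hD))
  obtain ⟨Q, hQ⟩ : ∃ Q : Finset X, (Q : Set X) = maximalSeparatedSet D A :=
    (Set.encard_ne_top_iff.mp (by rwa [encard_maximalSeparatedSet hpacking])).exists_finset_coe
  have hupper : (tilesMeeting C' A).ncard ≤ Q.card * K :=
    (Set.encard_le_coe_iff_finite_ncard_le.mp <| encard_tilesMeeting_le_card_mul_of_isCover
      (hQ ▸ isCover_maximalSeparatedSet hpacking) hK).2
  have hfar : ∀ q, ∃ z ∈ A, s ≤ dist z q := by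
    by_contra! ⟨q, hq⟩
    have hsD : s ≤ D := (le_mul_of_one_le_left' one_le_two).trans (le_self_add.trans hD)
    have hball : A ⊆ closedBall q D := fun z hz => (hq z hz).le.trans (by exact_mod_cast hsD)
    exact hKA.not_ge (Set.encard_le_coe_iff_finite_ncard_le.mp
      ((Set.encard_le_encard (tilesMeeting_mono hball)).trans (hK q))).2
  have hlower : Q.card * s ≤ (tilesMeeting C A).ncard * d :=
    card_mul_le_ncard_tilesMeeting_mul hA hAC hfin hd (hQ ▸ maximalSeparatedSet_subset)
      (hQ ▸ isSeparated_maximalSeparatedSet) hD fun q _ => hfar q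
  calc
    (tilesMeeting C' A).ncard * s ≤ (Q.card * K : ℕ) * s := by gcongr
    _ = K * (Q.card * s) := by push_cast; ring
    _ ≤ K * ((tilesMeeting C A).ncard * d) := by gcongr
    _ = K * d * (tilesMeeting C A).ncard := by ring

end Counting

section Volume

variable {E : Type*} [NormedAddCommGroup E] [NormedSpace ℝ E] [FiniteDimensional ℝ E]
  {C : Set (Set E)} {d r ρ : ℝ≥0}

lemma card_le_div_pow_of_pairwise_disjoint_ball {ι : Type*} {c : ι → E} {x : E}
    (hρ : 0 < ρ) (hdisj : Pairwise (Disjoint on fun i => ball (c i) ρ))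
    (hsub : ∀ i, ball (c i) ρ ⊆ closedBall x r) :
    (ENat.card ι : ℝ≥0∞) ≤ ((r / ρ) ^ finrank ℝ E : ℝ≥0) := by
  borelize E
  let μ : Measure E := Measure.addHaar
  have hball : ∀ i, μ (ball (c i) ρ) = ρ ^ finrank ℝ E * μ (ball 0 1) := fun i => by
    rw [Measure.addHaar_ball_of_pos μ _ (by exact_mod_cast hρ),
      ENNReal.ofReal_pow ρ.coe_nonneg, ENNReal.ofReal_coe_nnreal]
  have hvol : (ENat.card ι : ℝ≥0∞) * ρ ^ finrank ℝ E * μ (ball 0 1) ≤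
      r ^ finrank ℝ E * μ (ball 0 1) :=
    calc
      (ENat.card ι : ℝ≥0∞) * ρ ^ finrank ℝ E * μ (ball 0 1) = ∑' i, μ (ball (c i) ρ) := by
        simp only [hball, ENNReal.tsum_const, mul_assoc]
      _ ≤ μ (⋃ i, ball (c i) ρ) :=
        tsum_meas_le_meas_iUnion_of_disjoint μ (fun _ => measurableSet_ball) hdisj
      _ ≤ μ (closedBall x r) := measure_mono (Set.iUnion_subset hsub)
      _ = r ^ finrank ℝ E * μ (ball 0 1) := by
        rw [Measure.addHaar_closedBall μ _ r.coe_nonneg,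
          ENNReal.ofReal_pow r.coe_nonneg, ENNReal.ofReal_coe_nnreal]
  rw [div_pow, ENNReal.coe_div (pow_pos hρ _).ne', ENNReal.le_div_iff_mul_le
    (.inl (by exact_mod_cast (pow_pos hρ _).ne')) (.inl ENNReal.coe_ne_top)]
  push_cast
  exact (ENNReal.mul_le_mul_iff_left (measure_ball_pos μ 0 one_pos).ne'
    measure_ball_lt_top.ne).mp hvol

lemma encard_tilesMeeting_closedBall_le_div_pow (hdisj : C.PairwiseDisjoint interior)
    (hd : ∀ t ∈ C, ediam t ≤ d) (hρ : 0 < ρ) (hball : ∀ t ∈ C, ∃ c, closedBall c ρ ⊆ t) (x : E) :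
    ((tilesMeeting C (closedBall x r)).encard : ℝ≥0∞) ≤ (((r + d) / ρ) ^ finrank ℝ E : ℝ≥0) := by
  choose c hc using fun t : tilesMeeting C (closedBall x r) => hball t t.2.1
  refine card_le_div_pow_of_pairwise_disjoint_ball (c := c) (x := x) hρ ?_ ?_
  · intro t u htu
    have hint : ∀ t, ball (c t) ρ ⊆ interior t := fun t =>
      interior_maximal (ball_subset_closedBall.trans (hc t)) isOpen_ball
    exact (hdisj t.2.1 u.2.1 (Subtype.coe_ne_coe.mpr htu)).mono (hint t) (hint u)
  · intro t y hy
    obtain ⟨z, hzt, hz⟩ := t.2.2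
    have hyz : edist y z ≤ d :=
      (edist_le_ediam_of_mem (hc t (ball_subset_closedBall hy)) hzt).trans (hd t t.2.1)
    calc
      dist y x ≤ dist y z + dist z x := dist_triangle _ _ _
      _ ≤ d + r := add_le_add (edist_le_coe.mp hyz) hz
      _ = (r + d : ℝ≥0) := by push_cast; ring

lemma encard_tilesMeeting_closedBall_le_floor (hdisj : C.PairwiseDisjoint interior)
    (hd : ∀ t ∈ C, ediam t ≤ d) (hρ : 0 < ρ)
    (hball : ∀ t ∈ C, ∀ σ < ρ, ∃ c, closedBall c σ ⊆ t) (x : E) :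
    (tilesMeeting C (closedBall x r)).encard ≤ ⌊((r + d) / ρ) ^ finrank ℝ E⌋₊ := by
  rw [← ENat.floor_coe, ENat.le_floor]
  have hlim : Filter.Tendsto (fun σ : ℝ≥0 => (((r + d) / σ) ^ finrank ℝ E : ℝ≥0)) (𝓝[<] ρ)
      (𝓝 (((r + d) / ρ) ^ finrank ℝ E)) :=
    ((continuousAt_const.div continuousAt_id hρ.ne').pow _).mono_left nhdsWithin_le_nhds
  have := nhdsLT_neBot_of_exists_lt ⟨0, hρ⟩
  refine ge_of_tendsto (ENNReal.tendsto_coe.mpr hlim) ?_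
  filter_upwards [Ioo_mem_nhdsLT hρ] with σ hσ
  exact encard_tilesMeeting_closedBall_le_div_pow hdisj hd hσ.1 (fun t ht => hball t ht σ hσ.2) x

end Volume

section Plane

variable {C : Set (Set Plane)} {t : Set Plane}

lemma tilesR_nonneg (C : Set (Set Plane)) : 0 ≤ tilesR C :=
  div_nonneg (Real.sSup_nonneg (by rintro _ ⟨t, -, rfl⟩; exact diam_nonneg)) zero_le_two

lemma diam_le_two_mul_tilesR (hC : BddAbove (diam '' C)) (ht : t ∈ C) :
    diam t ≤ 2 * tilesR C := by
  rw [tilesR, mul_div_cancel₀ _ two_ne_zero]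
  exact le_csSup hC (Set.mem_image_of_mem diam ht)

lemma exists_closedBall_subset_of_lt_rmin {ρ : ℝ} (hρ : 0 ≤ ρ) (hρt : ρ < rmin t) :
    ∃ c, closedBall c ρ ⊆ t := by
  have hne : {r : ℝ | 0 < r ∧ ∃ c, closedBall c r ⊆ t}.Nonempty := by
    by_contra! hempty
    exact (hρ.trans_lt hρt).ne' (by rw [rmin, hempty, Real.sSup_empty])
  obtain ⟨r, ⟨-, c, hc⟩, hρr⟩ := exists_lt_of_lt_csSup hne hρt
  exact ⟨c, (closedBall_subset_closedBall hρr.le).trans hc⟩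

lemma tilesr_le_rmin (ht : t ∈ C) : tilesr C ≤ rmin t :=
  csInf_le ⟨0, by rintro _ ⟨s, -, rfl⟩; exact Real.sSup_nonneg fun r hr => hr.1.le⟩
    (Set.mem_image_of_mem rmin ht)

lemma LocFinite.tilesR_pos (hC : LocFinite C) (hbdd : ∀ t ∈ C, Bornology.IsBounded t)
    (hne : C.Nonempty) : 0 < tilesR C := by
  obtain ⟨t, ht⟩ := hne
  have hρ : 0 < tilesr C / 2 := half_pos hC.2
  obtain ⟨c, hc⟩ := exists_closedBall_subset_of_lt_rmin hρ.le
    ((half_lt_self hC.2).trans_le (tilesr_le_rmin ht))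
  have hdiam : diam (closedBall c (tilesr C / 2)) ≤ 2 * tilesR C :=
    (diam_mono hc (hbdd t ht)).trans (diam_le_two_mul_tilesR hC.1 ht)
  rw [diam_closedBall_eq c hρ.le] at hdiam
  linarith

lemma ediam_le_two_mul_tilesR (hC : BddAbove (diam '' C)) (hbdd : ∀ t ∈ C, Bornology.IsBounded t)
    (ht : t ∈ C) : ediam t ≤ (2 * tilesR C).toNNReal := by
  rw [← ENNReal.ofReal, ← ENNReal.ofReal_toReal (hbdd t ht).ediam_ne_top]
  exact ENNReal.ofReal_le_ofReal (diam_le_two_mul_tilesR hC ht)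

lemma LocFinite.tK_eq_floor (hC : LocFinite C) :
    tK C = ⌊(((2 * tilesR C).toNNReal + (2 * tilesR C).toNNReal) / (tilesr C).toNNReal) ^
      finrank ℝ Plane⌋₊ := by
  change ⌊16 * tilesR C ^ 2 / tilesr C ^ 2⌋₊ = ⌊((_ : ℝ≥0) : ℝ)⌋₊
  push_cast
  rw [Real.coe_toNNReal _ (mul_nonneg zero_le_two (tilesR_nonneg C)),
    Real.coe_toNNReal _ hC.2.le, finrank_euclideanSpace_fin]
  congr 1
  ring

lemma LocFinite.encard_tilesMeeting_closedBall_le_tK (hC : LocFinite C)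
    (hbdd : ∀ t ∈ C, Bornology.IsBounded t) (hdisj : C.PairwiseDisjoint interior) (x : Plane) :
    (tilesMeeting C (closedBall x (2 * tilesR C).toNNReal)).encard ≤ tK C := by
  rw [hC.tK_eq_floor]
  exact encard_tilesMeeting_closedBall_le_floor hdisj
    (fun t ht => ediam_le_two_mul_tilesR hC.1 hbdd ht) (Real.toNNReal_pos.mpr hC.2)
    (fun t ht σ hσ => exists_closedBall_subset_of_lt_rmin σ.coe_nonneg
      ((Real.lt_toNNReal_iff_coe_lt.mp hσ).trans_le (tilesr_le_rmin ht))) x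

variable {Γ : Set Plane} {C' : Set (Set Plane)}

lemma tL_mul_sub_le (hΓ : IsPreconnected Γ) (hbdd : ∀ t ∈ C, Bornology.IsBounded t)
    (hC : BddAbove (diam '' C)) (hΓC : Γ ⊆ ⋃₀ C) (hfin : (tilesMeeting C Γ).Finite)
    (hbdd' : ∀ t ∈ C', Bornology.IsBounded t) (hC' : LocFinite C')
    (hdisj : C'.PairwiseDisjoint interior) (hR : tilesR C ≤ tilesR C') (hK : tK C' < tL Γ C') :
    tL Γ C' * (tilesR C' - tilesR C) ≤ tK C' * (2 * tilesR C) * tL Γ C := by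
  have hD : 2 * (tilesR C' - tilesR C).toNNReal + (2 * tilesR C).toNNReal ≤
      (2 * tilesR C').toNNReal := by
    rw [← NNReal.coe_le_coe]
    push_cast
    rw [Real.coe_toNNReal _ (sub_nonneg.mpr hR),
      Real.coe_toNNReal _ (mul_nonneg zero_le_two (tilesR_nonneg C)),
      Real.coe_toNNReal _ (mul_nonneg zero_le_two (tilesR_nonneg C'))]
    linarith
  have hcount := ncard_tilesMeeting_mul_le hΓ hΓC hfin
    (fun t ht => ediam_le_two_mul_tilesR hC hbdd ht)
    (hC'.encard_tilesMeeting_closedBall_le_tK hbdd' hdisj) hK hD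
  rw [← NNReal.coe_le_coe] at hcount
  push_cast at hcount
  rwa [Real.coe_toNNReal _ (sub_nonneg.mpr hR),
    Real.coe_toNNReal _ (mul_nonneg zero_le_two (tilesR_nonneg C))] at hcount

lemma IsTile.isCompact (ht : IsTile t) : IsCompact t := by
  obtain ⟨-, ⟨e⟩⟩ := ht
  have : CompactSpace unitDisk := isCompact_iff_compactSpace.mp (isCompact_closedBall _ _)
  have : CompactSpace t := e.symm.compactSpace
  exact isCompact_iff_compactSpace.mpr this

lemma Tiling.isBounded (T : Tiling) : ∀ t ∈ T.tiles, Bornology.IsBounded t :=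
  fun t ht => (T.isTile t ht).isCompact.isBounded

lemma Tiling.pairwiseDisjoint_interior (T : Tiling) : T.tiles.PairwiseDisjoint interior :=
  fun _ ht _ hs hts => Set.disjoint_iff_inter_eq_empty.mpr (T.disjInt ht hs hts)

lemma IsJordanCurve.isPreconnected (hΓ : IsJordanCurve Γ) : IsPreconnected Γ := by
  obtain ⟨f, hf, -, rfl⟩ := hΓ
  have hrank : 1 < Module.rank ℝ Plane := by simp [← finrank_eq_rank]
  have : PreconnectedSpace (sphere (0 : Plane) 1) :=
    Subtype.preconnectedSpace (isPreconnected_sphere hrank 0 1)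
  exact isPreconnected_range hf

end Plane

theorem stmt_3_general {Γ : Set Plane} {C C' : Set (Set Plane)} (hΓ : IsPreconnected Γ)
    (hbdd : ∀ t ∈ C, Bornology.IsBounded t) (hC : BddAbove (diam '' C)) (hΓC : Γ ⊆ ⋃₀ C)
    (hbdd' : ∀ t ∈ C', Bornology.IsBounded t) (hC' : LocFinite C')
    (hdisj : C'.PairwiseDisjoint interior) (hK : tK C' < tL Γ C') (hL : tL Γ C' ≤ tL Γ C) :
    (tL Γ C' : ℝ) ≤ (2 * (tK C' : ℝ) + 1) * (tilesR C / tilesR C') * (tL Γ C : ℝ) := by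
  have hne' : C'.Nonempty :=
    (Set.nonempty_of_ncard_ne_zero (hK.trans_le' zero_le).ne').mono tilesMeeting_subset
  have hR' : 0 < tilesR C' := hC'.tilesR_pos hbdd' hne'
  have hfin : (tilesMeeting C Γ).Finite :=
    Set.finite_of_ncard_pos ((hK.trans_le hL).trans_le' zero_le)
  have hLR : tL Γ C' * tilesR C ≤ tL Γ C * tilesR C :=
    mul_le_mul_of_nonneg_right (by exact_mod_cast hL) (tilesR_nonneg C)
  have hmain : tL Γ C' * (tilesR C' - tilesR C) ≤ tK C' * (2 * tilesR C) * tL Γ C := by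
    rcases le_total (tilesR C) (tilesR C') with hR | hR
    · exact tL_mul_sub_le hΓ hbdd hC hΓC hfin hbdd' hC' hdisj hR hK
    · have := tilesR_nonneg C
      exact (mul_nonpos_of_nonneg_of_nonpos (Nat.cast_nonneg _) (sub_nonpos.mpr hR)).trans
        (by positivity)
  rw [mul_div_assoc', div_mul_eq_mul_div, le_div_iff₀ hR']
  linarith

/-- for a Jordan curve `Γ` and locally finite tilings `T, T'` with
`R_{T'} > R_T` and `K_{T'} < L(Γ,T') ≤ L(Γ,T)`, one has
`L(Γ,T') ≤ (2 K_{T'} + 1) (R_T/R_{T'}) L(Γ,T)`. -/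
theorem stmt_3 (Γ : Set Plane) (hΓ : IsJordanCurve Γ) (T T' : Tiling)
    (hT : LocFinite T.tiles) (hT' : LocFinite T'.tiles)
    (hR : tilesR T.tiles < tilesR T'.tiles)
    (hK : tK T'.tiles < tL Γ T'.tiles)
    (hL : tL Γ T'.tiles ≤ tL Γ T.tiles) :
    (tL Γ T'.tiles : ℝ) ≤
      (2 * (tK T'.tiles : ℝ) + 1) * (tilesR T.tiles / tilesR T'.tiles) *
        (tL Γ T.tiles : ℝ) :=
  stmt_3_general hΓ.isPreconnected T.isBounded hT.1 (T.covers ▸ Set.subset_univ Γ) T'.isBounded hT'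
    T'.pairwiseDisjoint_interior hK hL
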